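/- arXiv:2602.12334 — 5 statements merged into one kernel-verified Lean document; each statement's English description precedes it below -/
import Mathlib

section
/- Let L be a finite Boolean algebra with n atoms and R a pre-probability on L. Then there exists a semantic frame for R consisting only of atoms of L; consequently the semantic dimension of R (the common cardinality of its semantic frames) is at most n. -/
open scoped Classical

/-- A pre-probability on a Boolean algebra: `R ⊥ = 0` and `R` is additive on disjoint joins. -/
def IsPreProb {L : Type*} [BooleanAlgebra L] (R : L → ℂ) : Prop :=
  R ⊥ = 0 ∧ ∀ s t : L, s ⊓ t = ⊥ → R (s ⊔ t) = R s + R t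

/-- A semantic frame for `R`: a finite set of statements whose `R`-values are
`ℚ`-linearly independent, maximal among subsets of `L` with this property. -/
def IsSemanticFrame {L : Type*} [BooleanAlgebra L] (R : L → ℂ) (S : Finset L) : Prop :=
  LinearIndependent ℚ (fun s : S => R s) ∧
    ∀ T : Finset L, S ⊆ T → LinearIndependent ℚ (fun t : T => R t) → T = S

theorem preProb_mem_span {L : Type*} [BooleanAlgebra L] [Fintype L]
    (R : L → ℂ) (hR : IsPreProb R) (x : L) :
    R x ∈ Submodule.span ℚ (R '' {a : L | IsAtom a}) := by
  induction x using WellFoundedLT.induction with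
  | ind x ih =>
    rcases eq_bot_or_exists_atom_le x with h | ⟨a, ha, hax⟩
    · rw [h, hR.1]; exact Submodule.zero_mem _
    · have h1 : a ⊔ x \ a = x := sup_sdiff_cancel_right hax
      have h2 : a ⊓ x \ a = ⊥ := inf_sdiff_self_right
      have h3 : x \ a < x := sdiff_lt hax ha.1
      have h4 := hR.2 _ _ h2
      rw [h1] at h4
      rw [h4]
      exact Submodule.add_mem _ (Submodule.subset_span ⟨a, ha, rfl⟩) (ih _ h3)

theorem preProb_card_le {L : Type*} [BooleanAlgebra L] [Fintype L]
    (R : L → ℂ) (hR : IsPreProb R) (T : Finset L)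
    (hT : LinearIndependent ℚ (fun s : T => R s)) :
    T.card ≤ (Finset.univ.filter (fun a : L => IsAtom a)).card := by
  have h := linearIndependent_le_span_aux' _ hT
    (((Finset.univ.filter (fun a : L => IsAtom a)).image R : Finset ℂ) : Set ℂ) (by
      rintro _ ⟨t, rfl⟩
      have := preProb_mem_span R hR t
      simpa using this)
  simp only [Fintype.card_coe, Finset.coe_sort_coe] at h
  exact h.trans Finset.card_image_le

theorem stmt_8 {L : Type*} [BooleanAlgebra L] [Fintype L]
    (R : L → ℂ) (hR : IsPreProb R)
    (n : ℕ) (hn : (Finset.univ.filter (fun a : L => IsAtom a)).card = n) :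
    (∃ S : Finset L, IsSemanticFrame R S ∧ (∀ s ∈ S, IsAtom s) ∧ S.card ≤ n) ∧
    ∀ T : Finset L, IsSemanticFrame R T → T.card ≤ n := by
  subst hn
  refine ⟨?_, fun T hT => preProb_card_le R hR T hT.1⟩
  obtain ⟨b, hb, -, hspan, hli⟩ := exists_linearIndepOn_extension (K := ℚ) (v := R)
    (linearIndepOn_empty ℚ R) (Set.empty_subset {a : L | IsAtom a})
  have hli' : LinearIndependent ℚ (fun s : b.toFinset => R s) := by
    have : LinearIndepOn ℚ R (b.toFinset : Set L) := by simpa using hli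
    exact this
  refine ⟨b.toFinset, ⟨hli', ?_⟩, fun s hs => hb (by simpa using hs),
    preProb_card_le R hR _ hli'⟩
  intro T hST hT
  refine (Finset.Subset.antisymm hST ?_).symm
  intro t ht
  by_contra htb
  have hT' : LinearIndepOn ℚ R (T : Set L) := hT
  refine linearIndepOn_iff_notMem_span.1 hT' t ht ?_
  have h1 := Submodule.span_le.2 hspan (preProb_mem_span R hR t)
  refine Submodule.span_mono (Set.image_mono ?_) h1
  intro y hy
  refine ⟨hST (by simpa using hy), ?_⟩
  rintro rfl
  exact htb (by simpa using hy)
end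

section
/- Let L be a finite Boolean algebra, R a pre-probability on L, S a semantic frame for R, and a : ℂ → ℂ a map satisfying a(x+y) = a(x) + a(y) for all x, y. If a(R(s)) = R(s) for every s ∈ S, then a(R(s)) = R(s) for every s ∈ L; that is, two pre-probability representations related by an a-function that agree on a semantic frame agree everywhere. -/
theorem stmt_9 {L : Type*} [BooleanAlgebra L] [Fintype L]
    (R : L → ℂ) (hR : IsPreProb R)
    (S : Finset L) (hS : IsSemanticFrame R S)
    (a : ℂ → ℂ) (hadd : ∀ x y : ℂ, a (x + y) = a x + a y)
    (hfix : ∀ s ∈ S, a (R s) = R s) :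
    ∀ s : L, a (R s) = R s := by
  classical
  intro s
  let A : ℂ →+ ℂ := AddMonoidHom.mk' a hadd
  let f : ℂ →ₗ[ℚ] ℂ := A.toRatLinearMap
  have key : R s ∈ Submodule.span ℚ (R '' (S : Set L)) := by
    by_contra hs
    have hli : LinearIndepOn ℚ R (S : Set L) := hS.1
    have h2 := hli.insert hs
    have h3 : insert s S = S := by
      apply hS.2 _ (Finset.subset_insert _ _)
      have h4 : LinearIndepOn ℚ R ((insert s S : Finset L) : Set L) := by
        rw [Finset.coe_insert]; exact h2
      exact h4
    apply hs
    apply Submodule.subset_span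
    exact ⟨s, by rw [← h3]; simp, rfl⟩
  have hle : Submodule.span ℚ (R '' (S : Set L)) ≤ LinearMap.eqLocus f LinearMap.id := by
    rw [Submodule.span_le]
    rintro _ ⟨t, ht, rfl⟩
    exact hfix t ht
  exact hle key
end

section
/- Let L be a finite Boolean algebra, R a pre-probability on L, and s₁, …, sₙ ∈ L pairwise disjoint elements (sⱼ ∧ sₖ = ⊥ for j ≠ k) with s₁ ∨ ⋯ ∨ sₙ = ⊤. Suppose for each j we are given a function Rⱼ : L → ℂ and a map aⱼ : ℂ → ℂ satisfying aⱼ(x + y) = aⱼ(x) + aⱼ(y) for all x, y, such that aⱼ(Rⱼ(t)) = R(t) for every t ≤ sⱼ. Then for every s ∈ L, R(s) = Σⱼ aⱼ(Rⱼ(s ∧ sⱼ)). -/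
theorem stmt_10 {L : Type*} [BooleanAlgebra L] [Fintype L]
    (R : L → ℂ) (hR : IsPreProb R)
    (n : ℕ) (p : Fin n → L)
    (hdisj : ∀ j k : Fin n, j ≠ k → p j ⊓ p k = ⊥)
    (hcover : Finset.univ.sup p = ⊤)
    (Rloc : Fin n → L → ℂ) (a : Fin n → ℂ → ℂ)
    (hadd : ∀ (j : Fin n) (x y : ℂ), a j (x + y) = a j x + a j y)
    (hsync : ∀ j : Fin n, ∀ t : L, t ≤ p j → a j (Rloc j t) = R t) :
    ∀ s : L, R s = ∑ j : Fin n, a j (Rloc j (s ⊓ p j)) := by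
  intro s
  have key : ∀ S : Finset (Fin n), R (S.sup fun j => s ⊓ p j) = ∑ j ∈ S, R (s ⊓ p j) := by
    intro S
    induction S using Finset.induction_on with
    | empty => simpa using hR.1
    | insert j S hj ih =>
      rw [Finset.sup_insert, Finset.sum_insert hj, hR.2, ih]
      rw [← disjoint_iff, Finset.disjoint_sup_right]
      intro k hk
      have hjk : j ≠ k := fun h => hj (h ▸ hk)
      exact (disjoint_iff.2 (hdisj j k hjk)).mono inf_le_right inf_le_right
  have h := key Finset.univ
  rw [← Finset.sup_inf_distrib_left, hcover, inf_top_eq] at h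
  rw [h]
  exact Finset.sum_congr rfl fun j _ => (hsync j _ inf_le_right).symm
end

section
/- Let L be a finite Boolean algebra, t ∈ L, and let Q, R' : L → ℂ be pre-probabilities. Suppose there is a map a : ℂ → ℂ with a(x + y) = a(x) + a(y) for all x, y such that a(R'(u)) = Q(u) for every u ≤ t, and suppose the ℚ-linear span of {R'(u) : u ≤ t} has dimension at most 1 over ℚ. Let s' ≤ t with R'(s') ≠ 0. Then for every u ≤ t, Q(u) · R'(s') = R'(u) · Q(s'); equivalently, Q(u) = R'(u) · Q(s')/R'(s'). -/
theorem stmt_18 {L : Type*} [BooleanAlgebra L] [Fintype L] (t : L)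
    (Q R' : L → ℂ) (hQ : IsPreProb Q) (hR' : IsPreProb R')
    (a : ℂ → ℂ) (hadd : ∀ x y : ℂ, a (x + y) = a x + a y)
    (hsync : ∀ u : L, u ≤ t → a (R' u) = Q u)
    (hdim : Module.finrank ℚ (Submodule.span ℚ (R' '' {u : L | u ≤ t})) ≤ 1)
    (s' : L) (hs' : s' ≤ t) (hne : R' s' ≠ 0) :
    ∀ u : L, u ≤ t → Q u * R' s' = R' u * Q s' ∧ Q u = R' u * Q s' / R' s' := by
  intro u hu
  have key : Q u * R' s' = R' u * Q s' := by
    haveI : FiniteDimensional ℚ (Submodule.span ℚ (R' '' {u : L | u ≤ t})) :=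
      FiniteDimensional.span_of_finite ℚ (Set.toFinite _)
    obtain ⟨v, hv⟩ := finrank_le_one_iff.mp hdim
    have hmem : ∀ w : L, w ≤ t → ∃ c : ℚ, c • (v : ℂ) = R' w := by
      intro w hw
      obtain ⟨c, hc⟩ := hv ⟨R' w, Submodule.subset_span ⟨w, hw, rfl⟩⟩
      exact ⟨c, by simpa using congrArg Subtype.val hc⟩
    let A : ℂ →+ ℂ := AddMonoidHom.mk' a hadd
    have hA : ∀ (c : ℚ) (x : ℂ), a (c • x) = c • a x := fun c x => map_rat_smul A c x
    obtain ⟨c, hc⟩ := hmem u hu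
    obtain ⟨d, hd⟩ := hmem s' hs'
    rw [← hsync u hu, ← hsync s' hs', ← hc, ← hd, hA, hA]
    simp only [Rat.smul_def]
    ring
  exact ⟨key, by rw [eq_div_iff hne]; exact key⟩
end

section
/- Let L be a finite Boolean algebra and Q a pre-probability on L with Q(⊤) = 1. Let s₁, …, sₙ ∈ L be pairwise disjoint with s₁ ∨ ⋯ ∨ sₙ = ⊤, fix an index k, and assume Q(sⱼ) ≠ 0 for every j ≠ k. Let R' : L → ℂ be a pre-probability and a : ℂ → ℂ a map with a(x + y) = a(x) + a(y) for all x, y such that a(R'(u)) = Q(u) for every u ≤ sₖ; assume the ℚ-linear span of {R'(u) : u ≤ sₖ} has dimension at most 1 over ℚ, and let s' ≤ sₖ with R'(s') ≠ 0. Then for every s ∈ L, Q(s) = Σ_{j ≠ k} (Q(s ∧ sⱼ)/Q(sⱼ)) · Q(sⱼ) + R'(s ∧ sₖ) · Q(s')/R'(s'). -/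
theorem preProb_sum_aux {L : Type*} [BooleanAlgebra L] (Q : L → ℂ) (hQ : IsPreProb Q)
    {n : ℕ} (p : Fin n → L) (hdisj : ∀ j k : Fin n, j ≠ k → p j ⊓ p k = ⊥) (s : L)
    (S : Finset (Fin n)) : Q (s ⊓ S.sup p) = ∑ j ∈ S, Q (s ⊓ p j) := by
  classical
  induction S using Finset.induction_on with
  | empty => simpa using hQ.1
  | insert i S hi ih =>
    rw [Finset.sup_insert, Finset.sum_insert hi, inf_sup_left, hQ.2, ih]
    rw [← disjoint_iff]
    have h : Disjoint (p i) (S.sup p) := by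
      rw [Finset.disjoint_sup_right]
      intro j hj
      rw [disjoint_iff]
      exact hdisj i j (by rintro rfl; exact hi hj)
    exact h.mono inf_le_right inf_le_right

theorem stmt_19 {L : Type*} [BooleanAlgebra L] [Fintype L]
    (Q : L → ℂ) (hQ : IsPreProb Q) (htop : Q ⊤ = 1)
    (n : ℕ) (p : Fin n → L)
    (hdisj : ∀ j k : Fin n, j ≠ k → p j ⊓ p k = ⊥)
    (hcover : Finset.univ.sup p = ⊤)
    (k : Fin n) (hne : ∀ j : Fin n, j ≠ k → Q (p j) ≠ 0)
    (R' : L → ℂ) (hR' : IsPreProb R')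
    (a : ℂ → ℂ) (hadd : ∀ x y : ℂ, a (x + y) = a x + a y)
    (hsync : ∀ u : L, u ≤ p k → a (R' u) = Q u)
    (hdim : Module.finrank ℚ (Submodule.span ℚ (R' '' {u : L | u ≤ p k})) ≤ 1)
    (s' : L) (hs' : s' ≤ p k) (hne' : R' s' ≠ 0) :
    ∀ s : L, Q s =
      (∑ j ∈ Finset.univ.filter (fun j : Fin n => j ≠ k),
        (Q (s ⊓ p j) / Q (p j)) * Q (p j)) +
      R' (s ⊓ p k) * Q s' / R' s' := by
  intro s
  have h1 := preProb_sum_aux Q hQ p hdisj s Finset.univ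
  rw [hcover, inf_top_eq] at h1
  rw [h1, ← Finset.sum_filter_add_sum_filter_not Finset.univ (fun j : Fin n => j ≠ k)]
  congr 1
  · refine Finset.sum_congr rfl fun j hj => ?_
    rw [div_mul_cancel₀ _ (hne j (Finset.mem_filter.1 hj).2)]
  · have hk : Finset.univ.filter (fun j : Fin n => ¬ j ≠ k) = {k} := by
      ext j; simp
    rw [hk, Finset.sum_singleton]
    haveI : Module.Finite ℚ (Submodule.span ℚ (R' '' {u : L | u ≤ p k})) :=
      Module.Finite.span_of_finite ℚ (Set.toFinite _)
    obtain ⟨v, hv⟩ := finrank_le_one_iff.1 hdim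
    have hm : ∀ u : L, u ≤ p k → ∃ c : ℚ, c • (v : ℂ) = R' u := by
      intro u hu
      obtain ⟨c, hc⟩ := hv ⟨R' u, Submodule.subset_span ⟨u, hu, rfl⟩⟩
      exact ⟨c, by simpa using congrArg Subtype.val hc⟩
    obtain ⟨c, hc⟩ := hm (s ⊓ p k) inf_le_right
    obtain ⟨d, hd⟩ := hm s' hs'
    have ha : ∀ (q : ℚ) (x : ℂ), a (q • x) = q • a x := by
      intro q x
      exact map_rat_smul (AddMonoidHom.mk' a hadd) q x
    rw [← hsync _ inf_le_right, ← hsync _ hs', eq_div_iff hne', ← hc, ← hd, ha, ha]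
    simp only [Rat.smul_def]
    ring
end
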